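/- For all δ > 0 and C > 0 there exists D′ > 0, depending only on δ and C, with the following property: for every C-contracting geodesic segment γ in X from p to q with d(p,q) > 3C, every basepoint x₀ ∈ X, and all z, w ∈ X such that both triples (x₀, γ, z) and (x₀, γ, w) are C-aligned, one has (z|w)_{x₀} ≥ max(d(x₀,p), d(x₀,q)) − D′. -/

import Mathlib

/-!
The contraction property alone gives `D' = 7 * C`.

Let `T` be a geodesic from `x₀` to `z`. The projections of `x₀` and `z` to `S` are `C`-close to `p`
and `q`, hence more than `C` apart, so `T` must enter the `C`-neighbourhood of `S`. The part of `T`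
after its last point `y` at distance `C` from `S` has projection of diameter at most `C`, so
`d(y, q) ≤ 3C`, which gives `d(x₀, q) + d(q, z) ≤ d(x₀, z) + 6C` (`dist_add_dist_le_of_aligned`).
The same holds for `w`, and `d(z, w) ≤ d(z, q) + d(q, w)` yields `(z|w)_{x₀} ≥ d(x₀, q) - 6C`.
Since `p` is `C`-close to a nearest point of `S` to `x₀`, also `d(x₀, p) ≤ d(x₀, q) + C`.
-/

open Metric Set

/-- The nearest-point projection of a point `x` to a subset `A`. -/
def nearestProj {X : Type*} [MetricSpace X] (A : Set X) (x : X) : Set X :=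
  {a ∈ A | dist x a = Metric.infDist x A}

/-- `f` restricted to `s ⊆ ℝ` is a unit-speed geodesic. -/
def IsGeodesicOn {X : Type*} [MetricSpace X] (f : ℝ → X) (s : Set ℝ) : Prop :=
  ∀ u ∈ s, ∀ v ∈ s, dist (f u) (f v) = |u - v|

/-- `S` is (the image of) a geodesic segment from `x` to `y`. -/
def IsGeodSegment {X : Type*} [MetricSpace X] (S : Set X) (x y : X) : Prop :=
  ∃ (f : ℝ → X) (L : ℝ), 0 ≤ L ∧ IsGeodesicOn f (Set.Icc 0 L) ∧
    f 0 = x ∧ f L = y ∧ S = f '' Set.Icc 0 L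

/-- `X` is a geodesic metric space: any two points are joined by a geodesic segment. -/
def GeodesicSpace (X : Type*) [MetricSpace X] : Prop :=
  ∀ x y : X, ∃ S : Set X, IsGeodSegment S x y

/-- `A` is a `C`-contracting subset: any geodesic segment at distance at least `C`
from `A` has nearest-point projection to `A` of diameter at most `C`. -/
def Contracting {X : Type*} [MetricSpace X] (C : ℝ) (A : Set X) : Prop :=
  ∀ (S : Set X) (x y : X), IsGeodSegment S x y →
    (∀ p ∈ S, C ≤ Metric.infDist p A) →
    Metric.diam {a : X | ∃ p ∈ S, a ∈ nearestProj A p} ≤ C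

/-- The point `w` is `K`-aligned with the geodesic `S` relative to the marked
endpoint `e` of `S`: the diameter of `π_S(w) ∪ {e}` is less than `K`.
For a segment `S` from `x` to `y`, the pair `(w, S)` being `K`-aligned is
`AlignedIn K w S x`, and the pair `(S, z)` being `K`-aligned is `AlignedIn K z S y`. -/
def AlignedIn {X : Type*} [MetricSpace X] (K : ℝ) (w : X) (S : Set X) (e : X) : Prop :=
  Metric.diam (nearestProj S w ∪ {e}) < K

/-- The shadow `O_R(x,y)`: points `w` such that some geodesic segment from `x` to `w`
meets the open ball of radius `R` about `y`. -/
def Shadow {X : Type*} [MetricSpace X] (R : ℝ) (x y : X) : Set X :=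
  {w | ∃ S : Set X, IsGeodSegment S x w ∧ ∃ p ∈ S, dist p y < R}

/-- The Gromov product `(z|w)_x`. -/
noncomputable def gromovProd {X : Type*} [MetricSpace X] (x z w : X) : ℝ :=
  (dist x z + dist x w - dist z w) / 2

/-- `X` has `δ`-thin geodesic triangles. -/
def ThinTriangles (X : Type*) [MetricSpace X] (δ : ℝ) : Prop :=
  ∀ (x y z : X) (S₁ S₂ S₃ : Set X),
    IsGeodSegment S₁ x y → IsGeodSegment S₂ y z → IsGeodSegment S₃ x z →
    ∀ p ∈ S₃, Metric.infDist p (S₁ ∪ S₂) ≤ δ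

lemma IsGeodesicOn.continuousOn {X : Type*} [MetricSpace X] {f : ℝ → X} {s : Set ℝ}
    (hf : IsGeodesicOn f s) : ContinuousOn f s := by
  have : LipschitzOnWith 1 f s := LipschitzOnWith.of_dist_le_mul fun u hu v hv => by
    simp [hf u hu v hv, Real.dist_eq]
  exact this.continuousOn

lemma IsGeodSegment.isCompact {X : Type*} [MetricSpace X] {S : Set X} {x y : X}
    (h : IsGeodSegment S x y) : IsCompact S := by
  obtain ⟨f, L, -, hf, -, -, rfl⟩ := h
  exact isCompact_Icc.image_of_continuousOn hf.continuousOn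

lemma IsGeodSegment.left_mem {X : Type*} [MetricSpace X] {S : Set X} {x y : X}
    (h : IsGeodSegment S x y) : x ∈ S := by
  obtain ⟨f, L, hL, -, rfl, -, rfl⟩ := h
  exact ⟨0, ⟨le_rfl, hL⟩, rfl⟩

lemma IsGeodSegment.right_mem {X : Type*} [MetricSpace X] {S : Set X} {x y : X}
    (h : IsGeodSegment S x y) : y ∈ S := by
  obtain ⟨f, L, hL, -, -, rfl, rfl⟩ := h
  exact ⟨L, ⟨hL, le_rfl⟩, rfl⟩

lemma IsCompact.exists_mem_nearestProj {X : Type*} [MetricSpace X] {S : Set X}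
    (hS : IsCompact S) (hne : S.Nonempty) (x : X) : ∃ a, a ∈ nearestProj S x := by
  obtain ⟨a, ha, h⟩ := hS.exists_infDist_eq_dist hne x
  exact ⟨a, ha, h.symm⟩

lemma AlignedIn.dist_lt {X : Type*} [MetricSpace X] {S : Set X} {C : ℝ} {x e a : X}
    (h : AlignedIn C x S e) (hS : IsCompact S) (ha : a ∈ nearestProj S x) : dist a e < C := by
  refine lt_of_le_of_lt (Metric.dist_le_diam_of_mem ?_ (Or.inl ha) (Or.inr rfl)) h
  exact (hS.isBounded.subset fun _ hb => hb.1).union Bornology.isBounded_singleton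

/-- The contraction property for the restriction to `[s, t]` of a unit-speed geodesic, in terms of
projections of the two endpoints. -/
lemma Contracting.dist_le {X : Type*} [MetricSpace X] {S : Set X} {C : ℝ}
    (hC : Contracting C S) (hS : IsCompact S) {f : ℝ → X} {s t : ℝ} (hst : s ≤ t)
    (hf : IsGeodesicOn f (Icc s t)) (hfar : ∀ u ∈ Icc s t, C ≤ infDist (f u) S) {a b : X}
    (ha : a ∈ nearestProj S (f s)) (hb : b ∈ nearestProj S (f t)) : dist a b ≤ C := by
  have hseg : IsGeodSegment (f '' Icc s t) (f s) (f t) := by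
    refine ⟨fun u => f (s + u), t - s, by linarith, ?_, by simp, by simp, ?_⟩
    · intro u hu v hv
      rw [hf (s + u) ⟨by linarith [hu.1], by linarith [hu.2]⟩ (s + v)
        ⟨by linarith [hv.1], by linarith [hv.2]⟩]
      congr 1
      ring
    · ext y
      constructor
      · rintro ⟨u, hu, rfl⟩
        exact ⟨u - s, ⟨by linarith [hu.1], by linarith [hu.2]⟩, by simp⟩
      · rintro ⟨u, hu, rfl⟩
        exact ⟨s + u, ⟨by linarith [hu.1], by linarith [hu.2]⟩, rfl⟩
  have hd := hC _ _ _ hseg (by rintro _ ⟨u, hu, rfl⟩; exact hfar u hu)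
  refine le_trans (Metric.dist_le_diam_of_mem ?_ ?_ ?_) hd
  · exact hS.isBounded.subset (by rintro c ⟨_, _, hc⟩; exact hc.1)
  · exact ⟨_, hseg.left_mem, ha⟩
  · exact ⟨_, hseg.right_mem, hb⟩

/-- Geodesics from `x` to `z` pass within `3 * C` of the endpoint `q`, so the triangle inequality
through `q` is an equality up to `6 * C`. -/
lemma dist_add_dist_le_of_aligned {X : Type*} [MetricSpace X] (hX : GeodesicSpace X)
    {S : Set X} {p q x z : X} {C : ℝ} (hS : IsGeodSegment S p q) (hC : Contracting C S)
    (hpos : 0 < C) (hpq : 3 * C < dist p q) (hx : AlignedIn C x S p) (hz : AlignedIn C z S q) :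
    dist x q + dist q z ≤ dist x z + 6 * C := by
  have hcpt := hS.isCompact
  have hproj := hcpt.exists_mem_nearestProj ⟨p, hS.left_mem⟩
  obtain ⟨a, ha⟩ := hproj x
  obtain ⟨b, hb⟩ := hproj z
  have hap := hx.dist_lt hcpt ha
  have hbq := hz.dist_lt hcpt hb
  obtain ⟨T, f, L, hL, hf, rfl, rfl, -⟩ := hX x z
  set g : ℝ → ℝ := fun u => infDist (f u) S with hg
  have hgc : ContinuousOn g (Icc 0 L) :=
    (Metric.continuous_infDist_pt S).comp_continuousOn hf.continuousOn
  rcases le_or_gt (g L) C with hzC | hzC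
  -- in the first case `z` itself is within `2 * C` of `q`
  · have h1 : dist (f L) b ≤ C := hb.2.trans_le hzC
    have h2 := dist_triangle (f L) b q
    have h3 := dist_triangle (f 0) (f L) q
    rw [dist_comm q (f L)]
    linarith
  obtain ⟨t₁, ht₁, hgt₁⟩ : ∃ t ∈ Icc 0 L, g t < C := by
    by_contra! hcon
    have h1 := hC.dist_le hcpt hL hf hcon ha hb
    have h2 := dist_triangle p a q
    have h3 := dist_triangle a b q
    rw [dist_comm p a] at h2
    linarith
  have hivt : ∀ t ∈ Icc 0 L, g t < C → ∃ u ∈ Icc 0 L, t < u ∧ g u = C := by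
    intro t ht hgt
    obtain ⟨u, hu, hgu⟩ := intermediate_value_Icc ht.2
      (hgc.mono (Icc_subset_Icc_left ht.1)) ⟨hgt.le, hzC.le⟩
    refine ⟨u, ⟨ht.1.trans hu.1, hu.2⟩, lt_of_le_of_ne hu.1 ?_, hgu⟩
    rintro rfl
    exact hgt.ne hgu
  -- the last time at which the geodesic is at distance exactly `C` from `S`
  have hK : IsCompact (Icc 0 L ∩ g ⁻¹' {C}) :=
    isCompact_Icc.of_isClosed_subset (hgc.preimage_isClosed_of_isClosed isClosed_Icc
      isClosed_singleton) inter_subset_left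
  obtain ⟨u₁, hu₁, -, hgu₁⟩ := hivt t₁ ht₁ hgt₁
  obtain ⟨t₀, ⟨ht₀, hgt₀⟩, hmax⟩ := hK.exists_isGreatest ⟨u₁, hu₁, hgu₁⟩
  have hsub : Icc t₀ L ⊆ Icc 0 L := Icc_subset_Icc_left ht₀.1
  have hfar : ∀ u ∈ Icc t₀ L, C ≤ g u := by
    intro u hu
    by_contra! hcon
    obtain ⟨v, hv, huv, hgv⟩ := hivt u (hsub hu) hcon
    have := hmax ⟨hv, hgv⟩
    linarith [hu.1]
  obtain ⟨c, hc⟩ := hproj (f t₀)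
  have hcb := hC.dist_le hcpt ht₀.2 (fun u hu v hv => hf u (hsub hu) v (hsub hv)) hfar hc hb
  have hyc : dist (f t₀) c = C := hc.2.trans hgt₀
  have hyq : dist (f t₀) q ≤ 3 * C := by
    have h1 := dist_triangle (f t₀) c q
    have h2 := dist_triangle c b q
    linarith
  have hsplit : dist (f 0) (f t₀) + dist (f t₀) (f L) = dist (f 0) (f L) := by
    rw [hf 0 ⟨le_rfl, hL⟩ t₀ ht₀, hf t₀ ht₀ L ⟨hL, le_rfl⟩, hf 0 ⟨le_rfl, hL⟩ L ⟨hL, le_rfl⟩,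
      abs_of_nonpos (by linarith [ht₀.1]), abs_of_nonpos (by linarith [ht₀.2]),
      abs_of_nonpos (by linarith)]
    ring
  have h1 := dist_triangle (f 0) (f t₀) q
  have h2 := dist_triangle q (f t₀) (f L)
  rw [dist_comm q (f t₀)] at h2
  linarith

/-- two points aligned with a long `C`-contracting segment have
Gromov product at least `max(d(x₀,p), d(x₀,q)) - D'`, with `D'` depending only on
`δ` and `C`. -/
theorem stmt10 :
    ∀ (δ C : ℝ), 0 < δ → 0 < C →
    ∃ D' : ℝ, 0 < D' ∧
      ∀ (X : Type) [MetricSpace X] [ProperSpace X],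
        GeodesicSpace X → ThinTriangles X δ →
        ∀ (S : Set X) (p q : X), IsGeodSegment S p q → Contracting C S →
          3 * C < dist p q →
          ∀ (x₀ z w : X),
            (AlignedIn C x₀ S p ∧ AlignedIn C z S q) →
            (AlignedIn C x₀ S p ∧ AlignedIn C w S q) →
            gromovProd x₀ z w ≥ max (dist x₀ p) (dist x₀ q) - D' := by
  intro δ C _ hC
  refine ⟨7 * C, by linarith, ?_⟩
  intro X _ _ hX _ S p q hS hcon hpq x₀ z w ⟨hx, hz⟩ ⟨_, hw⟩
  have h1 := dist_add_dist_le_of_aligned hX hS hcon hC hpq hx hz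
  have h2 := dist_add_dist_le_of_aligned hX hS hcon hC hpq hx hw
  have h3 := dist_triangle z q w
  rw [dist_comm z q] at h3
  have hpx : dist x₀ p ≤ dist x₀ q + C := by
    obtain ⟨a, ha⟩ := hS.isCompact.exists_mem_nearestProj ⟨p, hS.left_mem⟩ x₀
    have h4 := hx.dist_lt hS.isCompact ha
    have h5 : dist x₀ a ≤ dist x₀ q := ha.2.trans_le (infDist_le_dist_of_mem hS.right_mem)
    linarith [dist_triangle x₀ a p]
  have hmax : max (dist x₀ p) (dist x₀ q) ≤ dist x₀ q + C := max_le hpx (by linarith)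
  unfold gromovProd
  linarith
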